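/- Every cycle-tree T admits a closed walk W that uses each edge lying on a block cycle exactly once and each edge lying on a block path exactly twice, crossing from one block to another block at each cut-point. Moreover, any such walk W is a closed walk of minimum length among closed walks using all edges of T, and conversely every minimum-length closed walk using all edges of T has this form. -/

import Mathlib

open Finset

/-- An oriented signed graph: each edge has an ordered pair of end-vertices and
an orientation value (`±1`) at each of its two ends.  The sign of an edge `e` is
`-ε₁(e)·ε₂(e)`. -/
structure OSG (V E : Type) where
  ends : E → V × V
  eps : E → ℤ × ℤ
  eps1 : ∀ e, (eps e).1 = 1 ∨ (eps e).1 = -1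
  eps2 : ∀ e, (eps e).2 = 1 ∨ (eps e).2 = -1

namespace OSG

variable {V E : Type} [DecidableEq V] [DecidableEq E] [Fintype E]

/-- The sign `σ(e)` of an edge. -/
def sign (G : OSG V E) (e : E) : ℤ := -((G.eps e).1 * (G.eps e).2)

/-- Boundary of an integer-valued function at a vertex. -/
def boundary (G : OSG V E) (f : E → ℤ) (v : V) : ℤ :=
  ∑ e : E, ((if (G.ends e).1 = v then (G.eps e).1 * f e else 0) +
            (if (G.ends e).2 = v then (G.eps e).2 * f e else 0))

/-- An integral flow: boundary vanishes at every vertex. -/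
def IsFlow (G : OSG V E) (f : E → ℤ) : Prop := ∀ v, G.boundary f v = 0

/-- Boundary of a real-valued function at a vertex. -/
def boundaryR (G : OSG V E) (f : E → ℝ) (v : V) : ℝ :=
  ∑ e : E, ((if (G.ends e).1 = v then ((G.eps e).1 : ℝ) * f e else 0) +
            (if (G.ends e).2 = v then ((G.eps e).2 : ℝ) * f e else 0))

/-- A real flow. -/
def IsFlowR (G : OSG V E) (f : E → ℝ) : Prop := ∀ v, G.boundaryR f v = 0

/-- A walk of length `n`: vertices `u 0, …, u n`, edges `x 0, …, x (n-1)`, where the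
`i`-th edge joins `u i` and `u (i+1)`; `fwd i` records whether the edge is traversed
from its first end to its second end. -/
structure Walk (G : OSG V E) (n : ℕ) where
  u : Fin (n + 1) → V
  x : Fin n → E
  fwd : Fin n → Bool
  compat_t : ∀ i : Fin n, fwd i = true → G.ends (x i) = (u i.castSucc, u i.succ)
  compat_f : ∀ i : Fin n, fwd i = false → G.ends (x i) = (u i.succ, u i.castSucc)

variable {G : OSG V E}

/-- A closed walk. -/
def Walk.IsClosed {n : ℕ} (W : G.Walk n) : Prop := W.u 0 = W.u (Fin.last n)

/-- The sign of a walk: product of the signs of its edges with multiplicity. -/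
def Walk.sgn {n : ℕ} (W : G.Walk n) : ℤ := ∏ i : Fin n, G.sign (W.x i)

/-- The support (underlying edge set) of a walk. -/
def Walk.support {n : ℕ} (W : G.Walk n) : Finset E := Finset.image W.x Finset.univ

/-- The number of occurrences of an edge in a walk. -/
def Walk.edgeCount {n : ℕ} (W : G.Walk n) (e : E) : ℕ :=
  (Finset.univ.filter (fun i => W.x i = e)).card

/-- The edge multiset of a walk. -/
def Walk.edgeMultiset {n : ℕ} (W : G.Walk n) : Multiset E :=
  Multiset.map W.x Finset.univ.val

/-- A direction `ε_W` of a walk: `a i = ε_W(u_i, x_{i+1})` is the value at the initial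
vertex of the `i`-th edge, `b i = ε_W(u_{i+1}, x_{i+1})` the value at its terminal
vertex; consecutive incidence values at an internal vertex cancel. -/
structure Direction {n : ℕ} (W : G.Walk n) where
  a : Fin n → ℤ
  b : Fin n → ℤ
  a_unit : ∀ i, a i = 1 ∨ a i = -1
  b_unit : ∀ i, b i = 1 ∨ b i = -1
  edge_rel : ∀ i, a i * b i = - G.sign (W.x i)
  consec : ∀ (i : Fin n) (h : i.val + 1 < n), b i + a ⟨i.val + 1, h⟩ = 0

/-- The closing condition for a direction of a closed walk:
`ε_W(u_0,x_1) + ε_W(u_n,x_n) = 0`. -/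
def Direction.IsClosedDir {n : ℕ} {W : G.Walk n} (d : Direction W) (hn : 0 < n) : Prop :=
  d.a ⟨0, hn⟩ + d.b ⟨n - 1, by omega⟩ = 0

/-- Midway-back avoided: whenever `u_α = u_β` (`α < β < n`),
`ε_W(u_β, x_β) = ε_W(u_α, x_{α+1})`. -/
def Direction.MBA {n : ℕ} {W : G.Walk n} (d : Direction W) : Prop :=
  ∀ (α β : Fin n), α.val < β.val → W.u α.castSucc = W.u β.castSucc →
    d.b ⟨β.val - 1, by have := β.isLt; omega⟩ = d.a α

/-- The orientation that occurrence `i` of the walk induces on its edge, recorded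
as the pair of values at the first and second ends of the edge. -/
def Direction.occOrient {n : ℕ} {W : G.Walk n} (d : Direction W) (i : Fin n) : ℤ × ℤ :=
  if W.fwd i then (d.a i, d.b i) else (d.b i, d.a i)

/-- A directed Eulerian walk: a directed closed walk of positive sign whose direction
induces the same orientation on all occurrences of each repeated edge. -/
def Direction.IsEulerian {n : ℕ} {W : G.Walk n} (d : Direction W) (hn : 0 < n) : Prop :=
  W.IsClosed ∧ d.IsClosedDir hn ∧ W.sgn = 1 ∧
    ∀ p q : Fin n, W.x p = W.x q → d.occOrient p = d.occOrient q

/-- A minimal (directed) Eulerian walk: no Eulerian walk is properly contained in it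
as edge multisets. -/
def Direction.IsMinimalEulerian {n : ℕ} {W : G.Walk n} (d : Direction W) (hn : 0 < n) : Prop :=
  d.IsEulerian hn ∧
    ∀ (m : ℕ) (hm : 0 < m) (W' : G.Walk m) (d' : Direction W'),
      d'.IsEulerian hm → W'.edgeMultiset ≤ W.edgeMultiset →
        W'.edgeMultiset = W.edgeMultiset

/-- The coupling `[ε, ε_W](x_i)` of the ambient orientation with the walk direction at
occurrence `i` (computed at the terminal vertex of the occurrence). -/
def Direction.coupleAt {n : ℕ} {W : G.Walk n} (d : Direction W) (i : Fin n) : ℤ :=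
  (if W.fwd i then (G.eps (W.x i)).2 else (G.eps (W.x i)).1) * d.b i

/-- The characteristic vector `f_{(W,ε_W)}` of a directed walk. -/
def Direction.charVec {n : ℕ} {W : G.Walk n} (d : Direction W) : E → ℤ :=
  fun e => ∑ i : Fin n, if W.x i = e then d.coupleAt i else 0

/-- The reorientation `ε_f` of `G` along the negative edges of `f : E → ℝ`. -/
noncomputable def reorientR (G : OSG V E) (f : E → ℝ) : OSG V E where
  ends := G.ends
  eps := fun e => if f e < 0 then (-(G.eps e).1, -(G.eps e).2) else G.eps e
  eps1 := by
    intro e; by_cases h : f e < 0 <;> rcases G.eps1 e with h1 | h1 <;> simp [h, h1]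
  eps2 := by
    intro e; by_cases h : f e < 0 <;> rcases G.eps2 e with h1 | h1 <;> simp [h, h1]

/-- Vertex set spanned by an edge set. -/
def verts (G : OSG V E) (S : Finset E) : Finset V :=
  S.image (fun e => (G.ends e).1) ∪ S.image (fun e => (G.ends e).2)

/-- Adjacency via an edge of `S`. -/
def adjOn (G : OSG V E) (S : Finset E) (v w : V) : Prop :=
  ∃ e ∈ S, G.ends e = (v, w) ∨ G.ends e = (w, v)

/-- Reachability inside the subgraph induced by `S`. -/
def Reach (G : OSG V E) (S : Finset E) : V → V → Prop :=
  Relation.ReflTransGen (G.adjOn S)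

/-- Connectivity of the subgraph induced by `S`. -/
def ConnectedOn (G : OSG V E) (S : Finset E) : Prop :=
  ∀ v ∈ G.verts S, ∀ w ∈ G.verts S, G.Reach S v w

/-- `v` is a cut-point of the subgraph induced by `S`: two vertices of the subgraph,
distinct from `v`, are joined in the subgraph but not after deleting `v`. -/
def IsCutPoint (G : OSG V E) (S : Finset E) (v : V) : Prop :=
  ∃ a ∈ G.verts S, ∃ b ∈ G.verts S, a ≠ v ∧ b ≠ v ∧ G.Reach S a b ∧
    ¬ Relation.ReflTransGen (fun p q => p ≠ v ∧ q ≠ v ∧ G.adjOn S p q) a b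

/-- `S` is the edge set of a cycle (simple closed path). -/
def IsCycleSet (G : OSG V E) (S : Finset E) : Prop :=
  ∃ (n : ℕ) (W : G.Walk n), 0 < n ∧ W.IsClosed ∧ Function.Injective W.x ∧
    (∀ i j : Fin n, W.u i.castSucc = W.u j.castSucc → i = j) ∧ W.support = S

/-- `S` is the edge set of a simple path of positive length from `a` to `b`. -/
def IsPathSet (G : OSG V E) (S : Finset E) (a b : V) : Prop :=
  ∃ (n : ℕ) (W : G.Walk n), 0 < n ∧ W.u 0 = a ∧ W.u (Fin.last n) = b ∧
    Function.Injective W.u ∧ Function.Injective W.x ∧ W.support = S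

/-- The sign of an edge set (product of edge signs). -/
def signSet (G : OSG V E) (S : Finset E) : ℤ := ∏ e ∈ S, G.sign e

/-- The intersection vertices determined by a family of block cycles and block paths:
common vertices of two distinct block cycles, together with endpoints of block paths. -/
def interVertsOf (G : OSG V E) (cycles : Finset (Finset E))
    (paths : Finset (Finset E × V × V)) : Finset V :=
  (cycles.biUnion fun C => cycles.biUnion fun C' =>
      if C = C' then ∅ else G.verts C ∩ G.verts C') ∪
    paths.biUnion fun p => {p.2.1, p.2.2}

/-- A cycle-tree: a connected signed subgraph decomposed into edge-disjoint block
cycles (comprising all its cycles) and vertex-disjoint block paths (each of positive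
length, joining exactly two block cycles precisely at its endpoints), all of whose
intersection vertices are cut-points.  Block cycles may also meet directly in a single
common vertex (a block path of zero length). -/
structure CycleTree (G : OSG V E) where
  edges : Finset E
  cycles : Finset (Finset E)
  paths : Finset (Finset E × V × V)
  conn : G.ConnectedOn edges
  cycles_nonempty : cycles.Nonempty
  cyc_is : ∀ C ∈ cycles, G.IsCycleSet C
  cyc_all : ∀ C ⊆ edges, G.IsCycleSet C → C ∈ cycles
  path_is : ∀ p ∈ paths, G.IsPathSet p.1 p.2.1 p.2.2
  partition : edges = cycles.biUnion id ∪ paths.biUnion (fun p => p.1)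
  cyc_disj : ∀ C ∈ cycles, ∀ C' ∈ cycles, C ≠ C' → Disjoint C C'
  cyc_path_disj : ∀ C ∈ cycles, ∀ p ∈ paths, Disjoint C p.1
  path_vdisj : ∀ p ∈ paths, ∀ q ∈ paths, p ≠ q → Disjoint (G.verts p.1) (G.verts q.1)
  cyc_meet : ∀ C ∈ cycles, ∀ C' ∈ cycles, C ≠ C' → (G.verts C ∩ G.verts C').card ≤ 1
  path_meets : ∀ p ∈ paths, ∃ C1 ∈ cycles, ∃ C2 ∈ cycles, C1 ≠ C2 ∧
    G.verts C1 ∩ G.verts p.1 = {p.2.1} ∧ G.verts C2 ∩ G.verts p.1 = {p.2.2} ∧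
    ∀ C ∈ cycles, C ≠ C1 → C ≠ C2 → G.verts C ∩ G.verts p.1 = ∅
  cuts : ∀ v ∈ G.interVertsOf cycles paths, G.IsCutPoint edges v

namespace CycleTree

variable (T : CycleTree G)

/-- Intersection vertices of a cycle-tree. -/
def interVerts : Finset V := G.interVertsOf T.cycles T.paths

/-- Edges lying on block cycles. -/
def cycleEdges : Finset E := T.cycles.biUnion id

/-- Edges lying on block paths. -/
def pathEdges : Finset E := T.paths.biUnion (fun p => p.1)

/-- The indicator `I_T`: 1 on block-cycle edges, 2 on block-path edges, 0 elsewhere. -/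
def indicator : E → ℤ :=
  fun e => if e ∈ T.cycleEdges then 1 else if e ∈ T.pathEdges then 2 else 0

/-- The indicator `I_T`, valued in `ℕ`. -/
def indicatorNat : E → ℕ :=
  fun e => if e ∈ T.cycleEdges then 1 else if e ∈ T.pathEdges then 2 else 0

/-- The Parity Condition: each balanced block cycle carries an even number of
intersection vertices, each unbalanced block cycle an odd number. -/
def IsEulerian : Prop :=
  ∀ C ∈ T.cycles,
    if G.signSet C = 1 then Even ((G.verts C ∩ T.interVerts).card)
    else Odd ((G.verts C ∩ T.interVerts).card)

end CycleTree

/-- `v` is a sink of the orientation `o` on the subgraph `S`: all incidences at `v`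
have value `-1`. -/
def IsSinkAt (G : OSG V E) (S : Finset E) (o : E → ℤ × ℤ) (v : V) : Prop :=
  v ∈ G.verts S ∧ ∀ e ∈ S,
    ((G.ends e).1 = v → (o e).1 = -1) ∧ ((G.ends e).2 = v → (o e).2 = -1)

/-- `v` is a source of the orientation `o` on the subgraph `S`. -/
def IsSourceAt (G : OSG V E) (S : Finset E) (o : E → ℤ × ℤ) (v : V) : Prop :=
  v ∈ G.verts S ∧ ∀ e ∈ S,
    ((G.ends e).1 = v → (o e).1 = 1) ∧ ((G.ends e).2 = v → (o e).2 = 1)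

/-- A direction of a cycle-tree: an orientation of the subgraph with neither sink nor
source, whose restriction to each block cycle has a sink or a source at each
intersection vertex on that cycle. -/
def CycleTree.IsDirection (T : CycleTree G) (o : E → ℤ × ℤ) : Prop :=
  (∀ e ∈ T.edges, ((o e).1 = 1 ∨ (o e).1 = -1) ∧ (o e).1 * (o e).2 = - G.sign e) ∧
  (∀ v ∈ G.verts T.edges, ¬ G.IsSinkAt T.edges o v ∧ ¬ G.IsSourceAt T.edges o v) ∧
  (∀ C ∈ T.cycles, ∀ v ∈ G.verts C ∩ T.interVerts, G.IsSinkAt C o v ∨ G.IsSourceAt C o v)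

/-- The coupling `[ε, ε_T]` of the ambient orientation with an orientation `o` of the
subgraph `T`. -/
def CycleTree.coupling (T : CycleTree G) (o : E → ℤ × ℤ) : E → ℤ :=
  fun e => if e ∈ T.edges then (G.eps e).1 * (o e).1 else 0

/-- The blocks of a cycle-tree: block cycles and block paths, as edge sets. -/
def CycleTree.blocks (T : CycleTree G) : Finset (Finset E) :=
  T.cycles ∪ T.paths.image (fun p => p.1)

/-- A walk crosses from one block to another at each intersection vertex: consecutive
edges of the walk (cyclically) meeting at an intersection vertex never lie in the same
block. -/
def CycleTree.Crosses (T : CycleTree G) {n : ℕ} (W : G.Walk n) : Prop :=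
  ∀ i : Fin n, W.u i.succ ∈ T.interVerts →
    ∀ B ∈ T.blocks, ¬ (W.x i ∈ B ∧ W.x ⟨(i.val + 1) % n, Nat.mod_lt _ i.pos⟩ ∈ B)

/-- A circuit: an Eulerian cycle-tree containing no proper Eulerian sub-cycle-tree. -/
def IsCircuit (G : OSG V E) (T : CycleTree G) : Prop :=
  T.IsEulerian ∧ ∀ T' : CycleTree G, T'.IsEulerian → T'.edges ⊆ T.edges →
    T'.edges = T.edges

/-- Type I circuit: a single balanced cycle. -/
def CycleTree.TypeI (T : CycleTree G) : Prop :=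
  ∃ C, T.cycles = {C} ∧ T.paths = ∅ ∧ G.signSet C = 1

/-- Type II circuit: two edge-disjoint unbalanced cycles sharing exactly one vertex. -/
def CycleTree.TypeII (T : CycleTree G) : Prop :=
  ∃ C1 C2, C1 ≠ C2 ∧ T.cycles = {C1, C2} ∧ T.paths = ∅ ∧
    G.signSet C1 = -1 ∧ G.signSet C2 = -1 ∧ (G.verts C1 ∩ G.verts C2).card = 1

/-- Type III circuit: two vertex-disjoint unbalanced cycles joined by a simple path of
positive length. -/
def CycleTree.TypeIII (T : CycleTree G) : Prop :=
  ∃ C1 C2 P, C1 ≠ C2 ∧ T.cycles = {C1, C2} ∧ T.paths = {P} ∧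
    G.signSet C1 = -1 ∧ G.signSet C2 = -1 ∧ G.verts C1 ∩ G.verts C2 = ∅

/-- End-block cycles: block cycles carrying exactly one intersection vertex. -/
def CycleTree.endBlocks (T : CycleTree G) : Finset (Finset E) :=
  T.cycles.filter fun C => (G.verts C ∩ T.interVerts).card = 1

/-- Indecomposability of a nontrivial integral flow. -/
def Indecomposable (G : OSG V E) (f : E → ℤ) : Prop :=
  G.IsFlow f ∧ (∃ e, f e ≠ 0) ∧
    ¬ ∃ f1 f2 : E → ℤ, G.IsFlow f1 ∧ G.IsFlow f2 ∧ (∃ e, f1 e ≠ 0) ∧ (∃ e, f2 e ≠ 0) ∧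
        (∀ e, f e = f1 e + f2 e) ∧ (∀ e, 0 ≤ f1 e * f2 e)

/-- The coupling `[ε, ε_f]` for an integral function `f`: `-1` where `f < 0`, else `1`. -/
def couplingF (G : OSG V E) (f : E → ℤ) : E → ℤ := fun e => if f e < 0 then -1 else 1

end OSG

/-!
Each edge of a cycle-tree is used at least as often as the indicator prescribes by a closed walk
through all edges: an edge used only once lies on a cycle made of walk edges, since the rest of the
walk joins its ends, whereas an edge of a block path lies on no cycle. The bound is attained: a
block cycle traversed once and a block path traversed back and forth are closed walks based at any
of their vertices, and by connectedness these can be inserted into one another until every block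
is covered. Hence the minimum-length closed walks are exactly those with the prescribed counts.

Crossing is automatic for such walks. Based at an intersection vertex `v`, the walk returns to `v`
before its end because `v` is a cut-point. If its first and last edges lay in the same block, the
first edge would occur only once before the return, so the block would be a cycle contained in the
part before the return, and the last edge would be used a second time.
-/

namespace OSG

variable {V E : Type} {G : OSG V E}

/-! ### Walks as lists of edges -/

section Traversal

variable {a b c d v : V} {e : E} {l l' : List E}

/-- The edge `e` has ends `a` and `b`, in either order. -/
def Joins (G : OSG V E) (e : E) (a b : V) : Prop :=
  G.ends e = (a, b) ∨ G.ends e = (b, a)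

theorem joins_ends (G : OSG V E) (e : E) : G.Joins e (G.ends e).1 (G.ends e).2 := Or.inl rfl

theorem Joins.symm (h : G.Joins e a b) : G.Joins e b a := Or.symm h

theorem Joins.eq_or_eq (h : G.Joins e a b) (h' : G.Joins e c d) :
    c = a ∧ d = b ∨ c = b ∧ d = a := by
  rcases h with h | h <;> rcases h' with h' | h' <;> grind

/-- `l` is the sequence of edges of a walk from `a` to `b`. Unlike `Walk`, this records no length
and no vertices, so that walks can be cut, reversed and concatenated as lists. -/
def IsTraversal (G : OSG V E) (a b : V) : List E → Prop
  | [] => a = b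
  | e :: l => ∃ c, G.Joins e a c ∧ IsTraversal G c b l

theorem isTraversal_append :
    G.IsTraversal a b (l ++ l') ↔ ∃ c, G.IsTraversal a c l ∧ G.IsTraversal c b l' := by
  induction l generalizing a with
  | nil => simp [IsTraversal]
  | cons e l ih =>
    simp only [List.cons_append, IsTraversal, ih]
    exact ⟨fun ⟨d, hd, c, hl, hl'⟩ => ⟨c, ⟨d, hd, hl⟩, hl'⟩,
      fun ⟨c, ⟨d, hd, hl⟩, hl'⟩ => ⟨d, hd, c, hl, hl'⟩⟩

theorem IsTraversal.append (h : G.IsTraversal a b l) (h' : G.IsTraversal b c l') :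
    G.IsTraversal a c (l ++ l') :=
  isTraversal_append.2 ⟨b, h, h'⟩

theorem isTraversal_concat :
    G.IsTraversal a b (l ++ [e]) ↔ ∃ c, G.IsTraversal a c l ∧ G.Joins e c b := by
  simp [isTraversal_append, IsTraversal]

theorem IsTraversal.exists_joins_head (h : G.IsTraversal a b l) (hl : l ≠ []) :
    ∃ w, G.Joins (l.head hl) a w := by
  obtain ⟨e, l, rfl⟩ := List.exists_cons_of_ne_nil hl
  exact h.imp fun w hw => hw.1

theorem IsTraversal.reverse (h : G.IsTraversal a b l) : G.IsTraversal b a l.reverse := by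
  induction l generalizing a with
  | nil => exact h.symm
  | cons e l ih =>
    obtain ⟨c, hc, hl⟩ := h
    rw [List.reverse_cons]
    exact isTraversal_concat.2 ⟨c, ih hl, hc.symm⟩

theorem IsTraversal.exists_joins_getLast (h : G.IsTraversal a b l) (hl : l ≠ []) :
    ∃ w, G.Joins (l.getLast hl) b w := by
  simpa only [List.head_reverse] using h.reverse.exists_joins_head (List.reverse_ne_nil_iff.2 hl)

/-- Some walk from `a` to `b` with edge sequence `l` visits `v`, at its ends or in between. -/
def Visits (G : OSG V E) (a b v : V) (l : List E) : Prop :=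
  ∃ A B, l = A ++ B ∧ G.IsTraversal a v A ∧ G.IsTraversal v b B

theorem IsTraversal.visits_left (h : G.IsTraversal a b l) : G.Visits a b a l :=
  ⟨[], l, rfl, rfl, h⟩

theorem Visits.cons (h : G.Visits c b v l) (he : G.Joins e a c) : G.Visits a b v (e :: l) := by
  obtain ⟨A, B, rfl, hA, hB⟩ := h
  exact ⟨e :: A, B, rfl, ⟨c, he, hA⟩, hB⟩

end Traversal

section Verts

variable [DecidableEq V] {S K : Finset E} {a b v : V} {e : E}

theorem mem_verts : v ∈ G.verts S ↔ ∃ e ∈ S, ∃ w, G.Joins e v w := by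
  simp only [verts, mem_union, mem_image]
  constructor
  · rintro (⟨e, he, rfl⟩ | ⟨e, he, rfl⟩)
    exacts [⟨e, he, _, G.joins_ends e⟩, ⟨e, he, _, (G.joins_ends e).symm⟩]
  · rintro ⟨e, he, w, h | h⟩
    exacts [Or.inl ⟨e, he, by rw [h]⟩, Or.inr ⟨e, he, by rw [h]⟩]

theorem Joins.left_mem_verts (h : G.Joins e a b) (he : e ∈ S) : a ∈ G.verts S :=
  mem_verts.2 ⟨e, he, b, h⟩

theorem Joins.right_mem_verts (h : G.Joins e a b) (he : e ∈ S) : b ∈ G.verts S :=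
  h.symm.left_mem_verts he

theorem disjoint_of_disjoint_verts (h : Disjoint (G.verts S) (G.verts K)) : Disjoint S K :=
  disjoint_left.2 fun e hS hK => disjoint_left.1 h
    ((G.joins_ends e).left_mem_verts hS) ((G.joins_ends e).left_mem_verts hK)

theorem IsTraversal.visits_of_mem_verts [DecidableEq E] {l : List E} (h : G.IsTraversal a b l)
    (hv : v ∈ G.verts l.toFinset) : G.Visits a b v l := by
  obtain ⟨f, hf, w, hw⟩ := mem_verts.1 hv
  rw [List.mem_toFinset] at hf
  clear hv
  induction l generalizing a with
  | nil => simp at hf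
  | cons e l ih =>
    obtain ⟨c, hc, hl⟩ := h
    rcases List.mem_cons.1 hf with rfl | hf
    · rcases hc.eq_or_eq hw with ⟨rfl, -⟩ | ⟨rfl, -⟩
      · exact IsTraversal.visits_left ⟨c, hc, hl⟩
      · exact hl.visits_left.cons hc
    · exact (ih hl hf).cons hc

/-- Otherwise `a` and the vertices of `S` would be closed under adjacency in `U`. -/
theorem ConnectedOn.exists_joins_not_mem {U : Finset E} (hU : G.ConnectedOn U)
    (ha : a ∈ G.verts U) (heU : e ∈ U) (heS : e ∉ S) :
    ∃ f ∈ U, f ∉ S ∧ ∃ v w, G.Joins f v w ∧ (v = a ∨ v ∈ G.verts S) := by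
  by_contra! hno
  have hreach : ∀ v, G.Reach U a v → v = a ∨ v ∈ G.verts S := fun v hv => by
    induction hv with
    | refl => exact Or.inl rfl
    | @tail v w _ hadj hv =>
      obtain ⟨f, hfU, hf⟩ := hadj
      have hfS : f ∈ S := by
        by_contra hfS
        rcases hv with hv | hv
        exacts [(hno f hfU hfS v w hf).1 hv, (hno f hfU hfS v w hf).2 hv]
      exact Or.inr (Joins.right_mem_verts hf hfS)
  have hends := G.joins_ends e
  have hno_e := hno e heU heS _ _ hends
  exact (hreach _ (hU a ha _ (hends.left_mem_verts heU))).elim hno_e.1 hno_e.2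

end Verts

/-! ### Cut-points -/

section CutPoint

variable {S : Finset E} {a b v : V} {l : List E}

/-- Reachability along the edges of `S` after deletion of the vertex `v`, the relation that
`IsCutPoint` is about. -/
def ReachAvoiding (G : OSG V E) (S : Finset E) (v : V) : V → V → Prop :=
  Relation.ReflTransGen fun p q => p ≠ v ∧ q ≠ v ∧ G.adjOn S p q

theorem ReachAvoiding.symm (h : G.ReachAvoiding S v a b) : G.ReachAvoiding S v b a := by
  have : Std.Symm fun p q => p ≠ v ∧ q ≠ v ∧ G.adjOn S p q :=
    ⟨fun p q ⟨hp, hq, e, he, h⟩ => ⟨hq, hp, e, he, Joins.symm h⟩⟩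
  exact Relation.ReflTransGen.stdSymm.symm _ _ h

theorem IsTraversal.visits_of_not_reachAvoiding (h : G.IsTraversal a b l) (hl : ∀ e ∈ l, e ∈ S)
    (ha : a ≠ v) (hab : ¬ G.ReachAvoiding S v a b) : G.Visits a b v l := by
  induction l generalizing a with
  | nil => cases h; exact absurd .refl hab
  | cons e l ih =>
    obtain ⟨c, hc, h⟩ := h
    rw [List.forall_mem_cons] at hl
    rcases eq_or_ne c v with rfl | hcv
    · exact h.visits_left.cons hc
    · exact (ih h hl.2 hcv fun hcb => hab (.head ⟨ha, hcv, e, hl.1, hc⟩ hcb)).cons hc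

variable [DecidableEq V] [DecidableEq E]

/-- The walk visits two vertices separated by `v`, and it cannot pass from one to the other without
visiting `v`. -/
theorem IsTraversal.exists_return (h : G.IsTraversal v v l) (hv : G.IsCutPoint l.toFinset v) :
    ∃ A B, l = A ++ B ∧ A ≠ [] ∧ B ≠ [] ∧ G.IsTraversal v v A ∧ G.IsTraversal v v B := by
  obtain ⟨p, hp, q, hq, hpv, hqv, -, hpq⟩ := hv
  obtain ⟨p, q, A, M, B, rfl, hpv, hqv, hpq, hA, hM, hB⟩ : ∃ p q A M B, l = A ++ (M ++ B) ∧
      p ≠ v ∧ q ≠ v ∧ ¬ G.ReachAvoiding l.toFinset v p q ∧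
      G.IsTraversal v p A ∧ G.IsTraversal p q M ∧ G.IsTraversal q v B := by
    obtain ⟨A, B, rfl, hA, hB⟩ := h.visits_of_mem_verts hp
    obtain ⟨e, he, w, hw⟩ := mem_verts.1 hq
    rw [List.toFinset_append, mem_union] at he
    rcases he with he | he
    · obtain ⟨A, M, rfl, hA, hM⟩ := hA.visits_of_mem_verts (hw.left_mem_verts he)
      exact ⟨q, p, A, M, B, List.append_assoc .., hqv, hpv, fun hr => hpq hr.symm, hA, hM, hB⟩
    · obtain ⟨M, B, rfl, hM, hB⟩ := hB.visits_of_mem_verts (hw.left_mem_verts he)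
      exact ⟨p, q, A, M, B, rfl, hpv, hqv, hpq, hA, hM, hB⟩
  obtain ⟨X, Y, rfl, hX, hY⟩ := hM.visits_of_not_reachAvoiding
    (fun e he => List.mem_toFinset.2 (List.mem_append_right A (List.mem_append_left B he))) hpv hpq
  refine ⟨A ++ X, Y ++ B, by simp, ?_, ?_, hA.append hX, hY.append hB⟩
  · rintro h
    obtain ⟨rfl, -⟩ := List.append_eq_nil_iff.1 h
    exact hpv hA.symm
  · rintro h
    obtain ⟨-, rfl⟩ := List.append_eq_nil_iff.1 h
    exact hqv hB

end CutPoint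

/-! ### From walks to lists of edges and back -/

namespace Walk

variable {n : ℕ} (W : G.Walk n)

theorem joins (i : Fin n) : G.Joins (W.x i) (W.u i.castSucc) (W.u i.succ) := by
  cases h : W.fwd i
  · exact Or.inr (W.compat_f i h)
  · exact Or.inl (W.compat_t i h)

/-- The edge sequence of a walk. -/
def edgeList : List E := List.ofFn W.x

@[simp]
theorem length_edgeList : W.edgeList.length = n := List.length_ofFn

theorem isTraversal_take (i : Fin (n + 1)) :
    G.IsTraversal (W.u 0) (W.u i) (W.edgeList.take i) := by
  induction i using Fin.induction with
  | zero => exact rfl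
  | succ i ih =>
    have htake : W.edgeList.take i.succ = W.edgeList.take i.castSucc ++ [W.x i] := by
      simp [edgeList, List.take_add_one]
    rw [htake]
    exact isTraversal_concat.2 ⟨_, ih, W.joins i⟩

theorem isTraversal_drop (i : Fin (n + 1)) :
    G.IsTraversal (W.u i) (W.u (Fin.last n)) (W.edgeList.drop i) := by
  induction i using Fin.reverseInduction with
  | last =>
    rw [List.drop_eq_nil_of_le (by simp)]
    exact rfl
  | cast i ih =>
    have hdrop : W.edgeList.drop i.castSucc = W.x i :: W.edgeList.drop i.succ := by
      rw [List.drop_eq_getElem_cons (by simp)]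
      simp [edgeList]
    rw [hdrop]
    exact ⟨_, W.joins i, ih⟩

theorem isTraversal : G.IsTraversal (W.u 0) (W.u (Fin.last n)) W.edgeList :=
  W.isTraversal_drop 0

theorem IsClosed.isTraversal_rotate {W : G.Walk n} (hW : W.IsClosed) (i : Fin (n + 1)) :
    G.IsTraversal (W.u i) (W.u i) (W.edgeList.rotate i) := by
  rw [List.rotate_eq_drop_append_take (by simpa using i.is_le)]
  have htake := W.isTraversal_take i
  rw [show W.u 0 = W.u (Fin.last n) from hW] at htake
  exact (W.isTraversal_drop i).append htake

theorem IsClosed.isTraversal {W : G.Walk n} (hW : W.IsClosed) :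
    G.IsTraversal (W.u 0) (W.u 0) W.edgeList := by
  simpa using hW.isTraversal_rotate 0

theorem head_rotate_edgeList (i : Fin n) (h : W.edgeList.rotate i.succ ≠ []) :
    (W.edgeList.rotate i.succ).head h = W.x ⟨(i + 1) % n, Nat.mod_lt _ i.pos⟩ := by
  simp [List.head_eq_getElem, List.getElem_rotate, edgeList]

theorem getLast_rotate_edgeList (i : Fin n) (h : W.edgeList.rotate i.succ ≠ []) :
    (W.edgeList.rotate i.succ).getLast h = W.x i := by
  have hmod : (n - 1 + (i + 1)) % n = i := by
    rw [show n - 1 + (i + 1) = n + i by have := i.pos; omega, Nat.add_mod_left,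
      Nat.mod_eq_of_lt i.isLt]
  simp [List.getLast_eq_getElem, List.getElem_rotate, edgeList, hmod]

theorem castSucc_eq_or_succ_eq {W : G.Walk n} (hu : Function.Injective W.u) {i : Fin n}
    {k : Fin (n + 1)} {v : V} (h : G.Joins (W.x i) (W.u k) v) :
    i.castSucc = k ∨ i.succ = k :=
  ((W.joins i).eq_or_eq h).imp (fun h => (hu h.1).symm) fun h => (hu h.1).symm

theorem injective_x_of_injective_u {W : G.Walk n} (hu : Function.Injective W.u) :
    Function.Injective W.x := fun i j hij => by
  have hj : G.Joins (W.x i) (W.u j.castSucc) (W.u j.succ) := hij ▸ W.joins j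
  have hcast := castSucc_eq_or_succ_eq hu hj
  have hsucc := castSucc_eq_or_succ_eq hu hj.symm
  simp only [Fin.ext_iff, Fin.val_castSucc, Fin.val_succ] at hcast hsucc ⊢
  omega

/-- The walk `W` continued along one more edge. -/
def snoc [DecidableEq V] {e : E} {b : V} (h : G.Joins e (W.u (Fin.last n)) b) : G.Walk (n + 1) where
  u := Fin.snoc W.u b
  x := Fin.snoc W.x e
  fwd := Fin.snoc W.fwd (decide (G.ends e = (W.u (Fin.last n), b)))
  compat_t i := by
    cases i using Fin.lastCases with
    | last =>
      simp only [Fin.snoc_last, Fin.succ_last, Fin.snoc_castSucc, decide_eq_true_eq, imp_self]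
    | cast i => simpa only [← Fin.castSucc_succ, Fin.snoc_castSucc] using W.compat_t i
  compat_f i := by
    cases i using Fin.lastCases with
    | last =>
      simp only [Fin.snoc_last, Fin.succ_last, Fin.snoc_castSucc, decide_eq_false_iff_not]
      exact h.resolve_left
    | cast i => simpa only [← Fin.castSucc_succ, Fin.snoc_castSucc] using W.compat_f i

theorem edgeList_snoc [DecidableEq V] {e : E} {b : V} (h : G.Joins e (W.u (Fin.last n)) b) :
    (W.snoc h).edgeList = W.edgeList ++ [e] := by
  simp only [snoc, edgeList, List.ofFn_succ_last, Fin.snoc_castSucc, Fin.snoc_last]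

section DecidableEdges

variable [DecidableEq E]

@[simp]
theorem toFinset_edgeList : W.edgeList.toFinset = W.support := by
  ext e
  simp [edgeList, support, List.mem_ofFn]

theorem count_edgeList (e : E) : W.edgeList.count e = W.edgeCount e := by
  rw [edgeList, List.ofFn_eq_map, ← Multiset.coe_count, ← Multiset.map_coe, Multiset.count_map,
    edgeCount]
  simp only [eq_comm]
  rfl

theorem sum_edgeCount_of_support_subset {S : Finset E} (hS : W.support ⊆ S) :
    ∑ e ∈ S, W.edgeCount e = n := by
  have hmaps : ∀ i ∈ univ, W.x i ∈ S := fun i hi => hS (mem_image_of_mem W.x hi)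
  simpa [edgeCount] using (card_eq_sum_card_fiberwise hmaps).symm

end DecidableEdges

end Walk

theorem IsTraversal.exists_walk {a b : V} {l : List E} (h : G.IsTraversal a b l) :
    ∃ (n : ℕ) (W : G.Walk n), W.u 0 = a ∧ W.u (Fin.last n) = b ∧ W.edgeList = l := by
  classical
  induction l using List.reverseRecOn generalizing b with
  | nil =>
    cases h
    exact ⟨0, ⟨fun _ => a, Fin.elim0, Fin.elim0, fun i => i.elim0, fun i => i.elim0⟩, rfl, rfl,
      rfl⟩
  | append_singleton l e ih =>
    obtain ⟨c, hl, hc⟩ := isTraversal_concat.1 h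
    obtain ⟨n, W, rfl, rfl, rfl⟩ := ih hl
    exact ⟨n + 1, W.snoc hc, by simp [Walk.snoc], by simp [Walk.snoc], W.edgeList_snoc hc⟩

/-! ### Cycles and simple paths -/

section Cycle

variable [DecidableEq E] {a b : V} {e : E} {l : List E}

/-- A shortest walk visits no vertex twice. -/
theorem IsTraversal.exists_injective_walk (h : G.IsTraversal a b l) :
    ∃ (n : ℕ) (W : G.Walk n), W.u 0 = a ∧ W.u (Fin.last n) = b ∧ Function.Injective W.u ∧
      W.support ⊆ l.toFinset := by
  obtain ⟨m, ⟨hm, hml⟩, hmin⟩ := exists_minimalFor_of_wellFoundedLT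
    (fun m => G.IsTraversal a b m ∧ m ⊆ l) List.length ⟨l, h, List.Subset.refl l⟩
  obtain ⟨n, W, rfl, rfl, rfl⟩ := hm.exists_walk
  refine ⟨n, W, rfl, rfl, .of_lt_imp_ne fun i j hij hu => ?_, ?_⟩
  · have hi := W.isTraversal_take i
    rw [hu] at hi
    have hshort := hmin ⟨hi.append (W.isTraversal_drop j), List.append_subset.2
      ⟨fun f hf => hml (List.mem_of_mem_take hf), fun f hf => hml (List.mem_of_mem_drop hf)⟩⟩
    simp only [List.length_append, List.length_take, List.length_drop, Walk.length_edgeList]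
      at hshort
    have := j.isLt
    omega
  · rw [← W.toFinset_edgeList]
    exact fun e he => List.mem_toFinset.2 (hml (List.mem_toFinset.1 he))

theorem Walk.isCycleSet_support_snoc [DecidableEq V] {n : ℕ} {W : G.Walk n}
    (hu : Function.Injective W.u) (he : G.Joins e (W.u (Fin.last n)) (W.u 0))
    (heW : e ∉ W.support) : G.IsCycleSet (W.snoc he).support := by
  refine ⟨n + 1, W.snoc he, n.succ_pos, ?_, ?_, fun i j hij => ?_, rfl⟩
  · simp only [Walk.IsClosed, Walk.snoc, Fin.snoc_last]
    exact Fin.snoc_castSucc (α := fun _ => V) _ W.u 0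
  · refine Fin.snoc_injective_iff.2 ⟨Walk.injective_x_of_injective_u hu, ?_⟩
    rintro ⟨i, rfl⟩
    exact heW (mem_image_of_mem W.x (mem_univ i))
  · simp only [Walk.snoc, Fin.snoc_castSucc] at hij
    exact hu hij

/-- The rest of the closed walk joins the two ends of an edge that it uses only once. -/
theorem IsTraversal.exists_isCycleSet_of_count_eq_one (h : G.IsTraversal a a l)
    (he : l.count e = 1) : ∃ C ⊆ l.toFinset, G.IsCycleSet C ∧ e ∈ C := by
  classical
  obtain ⟨A, B, rfl⟩ := List.append_of_mem (List.count_pos_iff.1 (he ▸ one_pos))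
  obtain ⟨p, hA, q, hpq, hB⟩ := isTraversal_append.1 h
  obtain ⟨n, W, rfl, rfl, hu, hW⟩ := (hB.append hA).exists_injective_walk
  have heW : e ∉ W.support := fun heW => by
    have hpos := List.count_pos_iff.2 (List.mem_toFinset.1 (hW heW))
    simp only [List.count_append, List.count_cons_self] at he hpos
    omega
  have hsupp : (W.snoc hpq).support = insert e W.support := by
    rw [← Walk.toFinset_edgeList, W.edgeList_snoc, List.toFinset_append, W.toFinset_edgeList,
      union_comm]
    rfl
  refine ⟨_, ?_, Walk.isCycleSet_support_snoc hu hpq heW, hsupp ▸ mem_insert_self e _⟩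
  rw [hsupp, insert_subset_iff]
  refine ⟨by simp, hW.trans fun f hf => ?_⟩
  simp only [List.toFinset_append, List.toFinset_cons, mem_union, mem_insert] at hf ⊢
  tauto

theorem IsPathSet.eq_of_joins {S : Finset E} {v w z : V} {f : E}
    (h : G.IsPathSet S a b) (hv : v = a ∨ v = b) (he : e ∈ S) (hf : f ∈ S)
    (hew : G.Joins e v w) (hfz : G.Joins f v z) : e = f := by
  obtain ⟨n, W, -, rfl, rfl, hu, -, rfl⟩ := h
  obtain ⟨i, -, rfl⟩ := mem_image.1 he
  obtain ⟨j, -, rfl⟩ := mem_image.1 hf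
  congr 1
  rcases hv with rfl | rfl <;>
  · have hi := Walk.castSucc_eq_or_succ_eq hu hew
    have hj := Walk.castSucc_eq_or_succ_eq hu hfz
    simp only [Fin.ext_iff, Fin.val_castSucc, Fin.val_succ, Fin.val_zero, Fin.val_last]
      at hi hj ⊢
    omega

end Cycle

/-! ### Gluing closed walks -/

section Tour

variable [DecidableEq E] {m m' : E → ℕ} {S K : Finset E} {a b v : V} {e : E} {l l' : List E}

/-- `l` is the edge sequence of a closed walk based at `a` that uses each edge `e` of `S` exactly
`m e` times and no other edge. Equality of the edge sets makes `m` positive on `S`. -/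
structure IsTour (G : OSG V E) (m : E → ℕ) (S : Finset E) (a : V) (l : List E) : Prop where
  isTraversal : G.IsTraversal a a l
  toFinset_eq : l.toFinset = S
  count_eq : ∀ e ∈ S, l.count e = m e

theorem IsTour.mem_iff (h : G.IsTour m S a l) : e ∈ l ↔ e ∈ S := by
  rw [← h.toFinset_eq, List.mem_toFinset]

theorem isTour_nil (G : OSG V E) (m : E → ℕ) (a : V) : G.IsTour m ∅ a [] :=
  ⟨rfl, rfl, by simp⟩

theorem IsTour.congr (h : G.IsTour m S a l) (hm : ∀ e ∈ S, m e = m' e) : G.IsTour m' S a l :=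
  ⟨h.isTraversal, h.toFinset_eq, fun e he => (h.count_eq e he).trans (hm e he)⟩

theorem IsTour.of_perm (h : G.IsTour m S a l) (h' : G.IsTraversal v v l') (hl : l.Perm l') :
    G.IsTour m S v l' :=
  ⟨h', by rw [← h.toFinset_eq, List.toFinset_eq_of_perm _ _ hl],
    fun e he => by rw [← hl.count_eq, h.count_eq e he]⟩

variable [DecidableEq V]

theorem IsTour.exists_rebase (h : G.IsTour m S a l) (hv : v ∈ G.verts S) :
    ∃ l', G.IsTour m S v l' := by
  obtain ⟨A, B, rfl, hA, hB⟩ := h.isTraversal.visits_of_mem_verts (h.toFinset_eq ▸ hv)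
  exact ⟨B ++ A, h.of_perm (hB.append hA) List.perm_append_comm⟩

theorem IsTour.exists_union (hl : G.IsTour m S a l) (hl' : G.IsTour m K v l')
    (hSK : Disjoint S K) (hv : v = a ∨ v ∈ G.verts S) : ∃ l'', G.IsTour m (S ∪ K) a l'' := by
  obtain ⟨A, B, rfl, hA, hB⟩ : G.Visits a a v l := by
    rcases hv with rfl | hv
    exacts [hl.isTraversal.visits_left, hl.isTraversal.visits_of_mem_verts (hl.toFinset_eq ▸ hv)]
  have hperm : (l' ++ (A ++ B)).Perm (A ++ (l' ++ B)) := List.perm_append_comm_assoc ..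
  refine ⟨A ++ (l' ++ B), hA.append (hl'.isTraversal.append hB), ?_, fun e he => ?_⟩
  · rw [← List.toFinset_eq_of_perm _ _ hperm, List.toFinset_append, hl.toFinset_eq,
      hl'.toFinset_eq, union_comm]
  · rw [← hperm.count_eq, List.count_append]
    rcases mem_union.1 he with he | he
    · rw [hl.count_eq e he, List.count_eq_zero.2, zero_add]
      exact fun h => disjoint_left.1 hSK he (hl'.mem_iff.1 h)
    · rw [hl'.count_eq e he, List.count_eq_zero.2, add_zero]
      exact fun h => disjoint_left.1 hSK (hl.mem_iff.1 h) he

/-- A tour of a maximal union of members of `𝓑` misses no edge, for otherwise a member touching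
the tour could be inserted. -/
theorem ConnectedOn.exists_isTour {𝓑 : Finset (Finset E)} (hconn : G.ConnectedOn (𝓑.biUnion id))
    (hdisj : (𝓑 : Set (Finset E)).PairwiseDisjoint id)
    (htour : ∀ K ∈ 𝓑, ∀ v ∈ G.verts K, ∃ l, G.IsTour m K v l)
    (ha : a ∈ G.verts (𝓑.biUnion id)) : ∃ l, G.IsTour m (𝓑.biUnion id) a l := by
  classical
  obtain ⟨𝓢, h𝓢, hmax⟩ := exists_maximal
    (s := 𝓑.powerset.filter fun 𝓢 => ∃ l, G.IsTour m (𝓢.biUnion id) a l)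
    ⟨∅, by simpa using ⟨[], G.isTour_nil m a⟩⟩
  obtain ⟨h𝓢𝓑, l, hl⟩ : 𝓢 ⊆ 𝓑 ∧ ∃ l, G.IsTour m (𝓢.biUnion id) a l := by simpa using h𝓢
  suffices hcover : 𝓑.biUnion id ⊆ 𝓢.biUnion id from
    ⟨l, (biUnion_subset_biUnion_of_subset_left id h𝓢𝓑).antisymm hcover ▸ hl⟩
  intro e he
  by_contra he𝓢
  obtain ⟨f, hf, hf𝓢, v, w, hvw, hv⟩ := hconn.exists_joins_not_mem ha he he𝓢
  obtain ⟨K, hK, hfK⟩ := mem_biUnion.1 hf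
  have hK𝓢 : K ∉ 𝓢 := fun hK𝓢 => hf𝓢 (mem_biUnion.2 ⟨K, hK𝓢, hfK⟩)
  obtain ⟨l', hl'⟩ := htour K hK v (hvw.left_mem_verts hfK)
  have hdisjK : Disjoint (𝓢.biUnion id) K := (disjoint_biUnion_left _ _ _).2 fun K' hK' =>
    hdisj (h𝓢𝓑 hK') hK (ne_of_mem_of_not_mem hK' hK𝓢)
  obtain ⟨l'', hl''⟩ := hl.exists_union hl' hdisjK hv
  refine hK𝓢 (hmax (mem_filter.2 ⟨mem_powerset.2 (insert_subset hK h𝓢𝓑), l'', ?_⟩)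
    (subset_insert K 𝓢) (mem_insert_self K 𝓢))
  rwa [biUnion_insert, union_comm]

theorem IsCycleSet.exists_isTour (hS : G.IsCycleSet S) (hv : v ∈ G.verts S) :
    ∃ l, G.IsTour 1 S v l := by
  obtain ⟨n, W, -, hW, hx, -, rfl⟩ := hS
  have hnodup : W.edgeList.Nodup := List.nodup_ofFn.2 hx
  have htour : G.IsTour 1 W.support (W.u 0) W.edgeList :=
    ⟨hW.isTraversal, W.toFinset_edgeList, fun e he =>
      List.count_eq_one_of_mem hnodup (List.mem_toFinset.1 (W.toFinset_edgeList ▸ he))⟩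
  exact htour.exists_rebase hv

/-- The path is traversed back and forth. -/
theorem IsPathSet.exists_isTour (hS : G.IsPathSet S a b) (hv : v ∈ G.verts S) :
    ∃ l, G.IsTour 2 S v l := by
  obtain ⟨n, W, -, -, -, -, hx, rfl⟩ := hS
  have hnodup : W.edgeList.Nodup := List.nodup_ofFn.2 hx
  have htour : G.IsTour 2 W.support (W.u 0) (W.edgeList ++ W.edgeList.reverse) :=
    ⟨W.isTraversal.append W.isTraversal.reverse, by simp, fun e he => by
      rw [List.count_append, List.count_reverse, List.count_eq_one_of_mem hnodup
        (List.mem_toFinset.1 (W.toFinset_edgeList ▸ he))]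
      rfl⟩
  exact htour.exists_rebase hv

end Tour

namespace CycleTree

section Blocks

variable [DecidableEq V] [DecidableEq E] (T : CycleTree G) {B B' C : Finset E}
  {p : Finset E × V × V} {e : E} {v : V}

theorem mem_blocks : B ∈ T.blocks ↔ B ∈ T.cycles ∨ ∃ p ∈ T.paths, p.1 = B := by
  simp only [blocks, mem_union, mem_image]

theorem biUnion_blocks : T.blocks.biUnion id = T.edges := by
  rw [T.partition, blocks, union_biUnion, image_biUnion]
  rfl

theorem pairwiseDisjoint_blocks : (T.blocks : Set (Finset E)).PairwiseDisjoint id := by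
  intro B hB B' hB' hne
  rcases T.mem_blocks.1 hB with hB | ⟨p, hp, rfl⟩ <;>
    rcases T.mem_blocks.1 hB' with hB' | ⟨q, hq, rfl⟩
  · exact T.cyc_disj B hB B' hB' hne
  · exact T.cyc_path_disj B hB q hq
  · exact (T.cyc_path_disj B' hB' p hp).symm
  · exact disjoint_of_disjoint_verts (T.path_vdisj p hp q hq fun h => hne (h ▸ rfl))

theorem eq_of_mem_blocks (hB : B ∈ T.blocks) (hB' : B' ∈ T.blocks) (he : e ∈ B) (he' : e ∈ B') :
    B = B' :=
  T.pairwiseDisjoint_blocks.elim_finset hB hB' e he he'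

theorem edges_nonempty : T.edges.Nonempty := by
  obtain ⟨C, hC⟩ := T.cycles_nonempty
  obtain ⟨n, W, hn, -, -, -, rfl⟩ := T.cyc_is C hC
  rw [← T.biUnion_blocks]
  exact ⟨W.x ⟨0, hn⟩, mem_biUnion.2
    ⟨_, T.mem_blocks.2 (Or.inl hC), mem_image_of_mem W.x (mem_univ _)⟩⟩

theorem endpoint_mem_verts (hp : p ∈ T.paths) (hv : v = p.2.1 ∨ v = p.2.2) :
    v ∈ G.verts p.1 := by
  obtain ⟨C₁, -, C₂, -, -, h₁, h₂, -⟩ := T.path_meets p hp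
  rcases hv with rfl | rfl
  · exact (mem_inter.1 (h₁ ▸ mem_singleton_self p.2.1)).2
  · exact (mem_inter.1 (h₂ ▸ mem_singleton_self p.2.2)).2

theorem eq_endpoint_of_mem_cycle (hp : p ∈ T.paths) (hC : C ∈ T.cycles) (hvC : v ∈ G.verts C)
    (hvp : v ∈ G.verts p.1) : v = p.2.1 ∨ v = p.2.2 := by
  obtain ⟨C₁, -, C₂, -, -, h₁, h₂, h⟩ := T.path_meets p hp
  have hv : v ∈ G.verts C ∩ G.verts p.1 := mem_inter.2 ⟨hvC, hvp⟩
  by_cases hC₁ : C = C₁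
  · exact Or.inl (mem_singleton.1 (h₁ ▸ hC₁ ▸ hv))
  by_cases hC₂ : C = C₂
  · exact Or.inr (mem_singleton.1 (h₂ ▸ hC₂ ▸ hv))
  exact absurd (h C hC hC₁ hC₂ ▸ hv) (notMem_empty v)

theorem eq_endpoint_of_mem_interVerts (hp : p ∈ T.paths) (hv : v ∈ T.interVerts)
    (hvp : v ∈ G.verts p.1) : v = p.2.1 ∨ v = p.2.2 := by
  simp only [interVerts, interVertsOf, mem_union, mem_biUnion, mem_insert, mem_singleton] at hv
  rcases hv with ⟨C, hC, C', -, hv⟩ | ⟨q, hq, hv⟩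
  · refine T.eq_endpoint_of_mem_cycle hp hC ?_ hvp
    split_ifs at hv
    exacts [absurd hv (notMem_empty v), (mem_inter.1 hv).1]
  · have hpq : p = q := by
      by_contra hne
      exact disjoint_left.1 (T.path_vdisj p hp q hq hne) hvp (T.endpoint_mem_verts hq hv)
    exact hpq ▸ hv

end Blocks

section Indicator

variable [DecidableEq V] [DecidableEq E] (T : CycleTree G) {B C : Finset E}
  {p : Finset E × V × V} {a v : V} {e : E} {l : List E}

theorem indicatorNat_of_mem_cycle (hC : C ∈ T.cycles) (he : e ∈ C) : T.indicatorNat e = 1 :=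
  if_pos (mem_biUnion.2 ⟨C, hC, he⟩)

theorem indicatorNat_of_mem_path (hp : p ∈ T.paths) (he : e ∈ p.1) : T.indicatorNat e = 2 := by
  rw [indicatorNat, if_neg, if_pos (show e ∈ T.pathEdges from mem_biUnion.2 ⟨p, hp, he⟩)]
  intro hcyc
  obtain ⟨C, hC, heC⟩ := mem_biUnion.1 hcyc
  exact disjoint_left.1 (T.cyc_path_disj C hC p hp) heC he

theorem indicatorNat_pos_iff : 0 < T.indicatorNat e ↔ e ∈ T.edges := by
  rw [T.partition, mem_union, indicatorNat, ← cycleEdges, ← pathEdges]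
  split_ifs <;> simp [*]

theorem toFinset_eq_edges (hl : ∀ e, l.count e = T.indicatorNat e) : l.toFinset = T.edges := by
  ext e
  rw [List.mem_toFinset, ← List.count_pos_iff, hl, T.indicatorNat_pos_iff]

theorem isTour_indicatorNat_iff : G.IsTour T.indicatorNat T.edges a l ↔
    G.IsTraversal a a l ∧ ∀ e, l.count e = T.indicatorNat e := by
  refine ⟨fun h => ⟨h.isTraversal, fun e => ?_⟩,
    fun ⟨h, hl⟩ => ⟨h, T.toFinset_eq_edges hl, fun e _ => hl e⟩⟩
  by_cases he : e ∈ T.edges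
  · exact h.count_eq e he
  · rw [List.count_eq_zero.2 (mt h.mem_iff.1 he),
      Nat.eq_zero_of_not_pos (mt T.indicatorNat_pos_iff.1 he)]

theorem exists_isTour_of_mem_blocks (hB : B ∈ T.blocks) (hv : v ∈ G.verts B) :
    ∃ l, G.IsTour T.indicatorNat B v l := by
  rcases T.mem_blocks.1 hB with hC | ⟨p, hp, rfl⟩
  · obtain ⟨l, hl⟩ := (T.cyc_is B hC).exists_isTour hv
    exact ⟨l, hl.congr fun e he => (T.indicatorNat_of_mem_cycle hC he).symm⟩
  · obtain ⟨l, hl⟩ := (T.path_is p hp).exists_isTour hv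
    exact ⟨l, hl.congr fun e he => (T.indicatorNat_of_mem_path hp he).symm⟩

theorem exists_isTour (ha : a ∈ G.verts T.edges) :
    ∃ l, G.IsTour T.indicatorNat T.edges a l := by
  rw [← T.biUnion_blocks] at ha ⊢
  exact ConnectedOn.exists_isTour (T.biUnion_blocks ▸ T.conn) T.pairwiseDisjoint_blocks
    (fun B hB v hv => T.exists_isTour_of_mem_blocks hB hv) ha

theorem exists_mem_cycles_of_count_eq_one (hl : G.IsTraversal a a l) (hlT : l.toFinset ⊆ T.edges)
    (he : l.count e = 1) : ∃ C ∈ T.cycles, e ∈ C ∧ C ⊆ l.toFinset := by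
  obtain ⟨C, hCl, hC, heC⟩ := hl.exists_isCycleSet_of_count_eq_one he
  exact ⟨C, T.cyc_all C (hCl.trans hlT) hC, heC, hCl⟩

theorem indicatorNat_le_count (hl : G.IsTraversal a a l) (hlT : l.toFinset = T.edges) (e : E) :
    T.indicatorNat e ≤ l.count e := by
  by_cases he : e ∈ T.edges
  swap
  · rw [Nat.eq_zero_of_not_pos (mt T.indicatorNat_pos_iff.1 he)]
    exact zero_le
  have hpos : 0 < l.count e := List.count_pos_iff.2 (List.mem_toFinset.1 (hlT ▸ he))
  rw [← T.biUnion_blocks] at he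
  obtain ⟨B, hB, heB⟩ := mem_biUnion.1 he
  rcases T.mem_blocks.1 hB with hC | ⟨p, hp, rfl⟩
  · rwa [T.indicatorNat_of_mem_cycle hC heB]
  · rw [T.indicatorNat_of_mem_path hp heB]
    have hne : l.count e ≠ 1 := fun hone => by
      obtain ⟨C, hC, heC, -⟩ := T.exists_mem_cycles_of_count_eq_one hl hlT.subset hone
      exact disjoint_left.1 (T.cyc_path_disj C hC p hp) heC heB
    omega

end Indicator

/-! ### Crossing at intersection vertices -/

section Crossing

variable [DecidableEq V] [DecidableEq E] (T : CycleTree G) {B : Finset E} {v : V}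
  {l A D : List E}

theorem count_head_eq_one_of_return (hAD : ∀ e, (A ++ D).count e = T.indicatorNat e)
    (hAv : G.IsTraversal v v A) (hDv : G.IsTraversal v v D) (hA : A ≠ []) (hD : D ≠ [])
    (hv : v ∈ T.interVerts) (hB : B ∈ T.blocks) (hhead : A.head hA ∈ B)
    (hlast : D.getLast hD ∈ B) : A.count (A.head hA) = 1 := by
  have hcount := hAD (A.head hA)
  have hposA : 0 < A.count (A.head hA) := List.count_pos_iff.2 (List.head_mem hA)
  rw [List.count_append] at hcount
  rcases T.mem_blocks.1 hB with hC | ⟨p, hp, rfl⟩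
  · rw [T.indicatorNat_of_mem_cycle hC hhead] at hcount
    omega
  · obtain ⟨w, hw⟩ := hAv.exists_joins_head hA
    obtain ⟨z, hz⟩ := hDv.exists_joins_getLast hD
    have hheadlast : A.head hA = D.getLast hD := (T.path_is p hp).eq_of_joins
      (T.eq_endpoint_of_mem_interVerts hp hv (hw.left_mem_verts hhead)) hhead hlast hw hz
    have hposD : 0 < D.count (A.head hA) :=
      List.count_pos_iff.2 (hheadlast ▸ List.getLast_mem hD)
    rw [T.indicatorNat_of_mem_path hp hhead] at hcount
    omega

theorem getLast_not_mem_of_head_mem (hl : G.IsTour T.indicatorNat T.edges v l)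
    (hv : v ∈ T.interVerts) (hB : B ∈ T.blocks) (hne : l ≠ []) (hhead : l.head hne ∈ B) :
    l.getLast hne ∉ B := by
  intro hlast
  obtain ⟨hlv, hcount⟩ := T.isTour_indicatorNat_iff.1 hl
  obtain ⟨A, D, rfl, hA, hD, hAv, hDv⟩ := hlv.exists_return (hl.toFinset_eq ▸ T.cuts v hv)
  rw [List.head_append_of_ne_nil hA] at hhead
  rw [List.getLast_append_of_ne_nil _ hD] at hlast
  have hAT : A.toFinset ⊆ T.edges := by
    rw [← hl.toFinset_eq, List.toFinset_append]
    exact subset_union_left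
  obtain ⟨C, hC, hheadC, hCA⟩ := T.exists_mem_cycles_of_count_eq_one hAv hAT
    (T.count_head_eq_one_of_return hcount hAv hDv hA hD hv hB hhead hlast)
  obtain rfl : B = C := T.eq_of_mem_blocks hB (T.mem_blocks.2 (Or.inl hC)) hhead hheadC
  have hposA := List.count_pos_iff.2 (List.mem_toFinset.1 (hCA hlast))
  have hposD := List.count_pos_iff.2 (List.getLast_mem hD)
  have hone := hcount (D.getLast hD)
  rw [List.count_append, T.indicatorNat_of_mem_cycle hC hlast] at hone
  omega

end Crossing

section ClosedWalk

variable [DecidableEq V] [DecidableEq E] (T : CycleTree G) {n : ℕ} {W : G.Walk n}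

theorem crosses_of_edgeCount_eq (hW : W.IsClosed)
    (hcount : ∀ e, W.edgeCount e = T.indicatorNat e) : T.Crosses W := by
  rintro i hi B hB ⟨hx, hx'⟩
  have hne : W.edgeList.rotate i.succ ≠ [] := by
    rw [← List.length_pos_iff, List.length_rotate, W.length_edgeList]
    exact i.pos
  have htour : G.IsTour T.indicatorNat T.edges (W.u i.succ) (W.edgeList.rotate i.succ) :=
    T.isTour_indicatorNat_iff.2 ⟨hW.isTraversal_rotate i.succ, fun e => by
      rw [(List.rotate_perm _ _).count_eq, W.count_edgeList, hcount]⟩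
  refine T.getLast_not_mem_of_head_mem htour hi hB hne ?_ ?_
  · rwa [W.head_rotate_edgeList]
  · rwa [W.getLast_rotate_edgeList]

theorem support_eq_edges (hcount : ∀ e, W.edgeCount e = T.indicatorNat e) :
    W.support = T.edges := by
  rw [← W.toFinset_edgeList]
  exact T.toFinset_eq_edges fun e => (W.count_edgeList e).trans (hcount e)

theorem length_eq_sum_indicatorNat (hcount : ∀ e, W.edgeCount e = T.indicatorNat e) :
    n = ∑ e ∈ T.edges, T.indicatorNat e := by
  simp only [← hcount, W.sum_edgeCount_of_support_subset (T.support_eq_edges hcount).subset]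

theorem indicatorNat_le_edgeCount (hW : W.IsClosed) (hs : W.support = T.edges) (e : E) :
    T.indicatorNat e ≤ W.edgeCount e := by
  rw [← W.count_edgeList]
  exact T.indicatorNat_le_count hW.isTraversal (W.toFinset_edgeList.trans hs) e

theorem sum_indicatorNat_le_length (hW : W.IsClosed) (hs : W.support = T.edges) :
    ∑ e ∈ T.edges, T.indicatorNat e ≤ n :=
  (sum_le_sum fun e _ => T.indicatorNat_le_edgeCount hW hs e).trans_eq
    (W.sum_edgeCount_of_support_subset hs.subset)

theorem edgeCount_eq_of_length_le (hW : W.IsClosed) (hs : W.support = T.edges)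
    (hn : n ≤ ∑ e ∈ T.edges, T.indicatorNat e) (e : E) : W.edgeCount e = T.indicatorNat e := by
  have hle : ∀ e, T.indicatorNat e ≤ W.edgeCount e := T.indicatorNat_le_edgeCount hW hs
  have hsum : ∑ e ∈ insert e T.edges, T.indicatorNat e =
      ∑ e ∈ insert e T.edges, W.edgeCount e := by
    refine le_antisymm (sum_le_sum fun e _ => hle e) ?_
    rw [W.sum_edgeCount_of_support_subset (hs.subset.trans (subset_insert e _))]
    exact hn.trans (sum_le_sum_of_subset (subset_insert e _))
  exact ((sum_eq_sum_iff_of_le fun e _ => hle e).1 hsum e (mem_insert_self e _)).symm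

theorem exists_isClosed_edgeCount_eq : ∃ (n : ℕ) (W : G.Walk n), 0 < n ∧ W.IsClosed ∧
    ∀ e, W.edgeCount e = T.indicatorNat e := by
  obtain ⟨e, he⟩ := T.edges_nonempty
  obtain ⟨l, hl⟩ := T.exists_isTour ((G.joins_ends e).left_mem_verts he)
  obtain ⟨hclosed, hcount⟩ := T.isTour_indicatorNat_iff.1 hl
  obtain ⟨n, W, hfirst, hlast, rfl⟩ := hclosed.exists_walk
  refine ⟨n, W, ?_, hfirst.trans hlast.symm, fun e => by rw [← W.count_edgeList, hcount]⟩
  rw [← W.length_edgeList]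
  exact List.length_pos_of_mem (hl.mem_iff.2 he)

end ClosedWalk

end CycleTree

theorem cycleTree_minimum_closed_walk_general {V E : Type} [DecidableEq V] [DecidableEq E]
    {G : OSG V E} (T : CycleTree G) :
    (∃ (n : ℕ) (W : G.Walk n), 0 < n ∧ W.IsClosed ∧
      (∀ e, W.edgeCount e = T.indicatorNat e) ∧ T.Crosses W) ∧
    (∀ (n : ℕ) (W : G.Walk n), (∀ e, W.edgeCount e = T.indicatorNat e) →
      ∀ (m : ℕ) (W' : G.Walk m), W'.IsClosed → W'.support = T.edges → n ≤ m) ∧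
    (∀ (m : ℕ) (W' : G.Walk m), W'.IsClosed → W'.support = T.edges →
      (∀ (m' : ℕ) (W'' : G.Walk m'), W''.IsClosed → W''.support = T.edges → m ≤ m') →
      (∀ e, W'.edgeCount e = T.indicatorNat e) ∧ T.Crosses W') := by
  obtain ⟨n₀, W₀, hn₀, hW₀, hcount₀⟩ := T.exists_isClosed_edgeCount_eq
  refine ⟨⟨n₀, W₀, hn₀, hW₀, hcount₀, T.crosses_of_edgeCount_eq hW₀ hcount₀⟩, ?_, ?_⟩
  · intro n W hcount m W' hW' hs
    exact (T.length_eq_sum_indicatorNat hcount).trans_le (T.sum_indicatorNat_le_length hW' hs)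
  · intro m W' hW' hs hmin
    have hm : m ≤ ∑ e ∈ T.edges, T.indicatorNat e :=
      (hmin n₀ W₀ hW₀ (T.support_eq_edges hcount₀)).trans_eq
        (T.length_eq_sum_indicatorNat hcount₀)
    have hcount := T.edgeCount_eq_of_length_le hW' hs hm
    exact ⟨hcount, T.crosses_of_edgeCount_eq hW' hcount⟩

end OSG

/-- every cycle-tree carries a closed walk using each block-cycle edge
once and each block-path edge twice, crossing blocks at cut-points; such walks are
exactly the minimum-length closed walks using all edges of `T`. -/
theorem OSG.cycleTree_minimum_closed_walk
    {V E : Type} [DecidableEq V] [DecidableEq E] [Fintype E] {G : OSG V E}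
    (T : OSG.CycleTree G) :
    (∃ (n : ℕ) (W : G.Walk n), 0 < n ∧ W.IsClosed ∧
      (∀ e, W.edgeCount e = T.indicatorNat e) ∧ T.Crosses W) ∧
    (∀ (n : ℕ) (W : G.Walk n), 0 < n → W.IsClosed →
      (∀ e, W.edgeCount e = T.indicatorNat e) → T.Crosses W →
      ∀ (m : ℕ) (W' : G.Walk m), W'.IsClosed → W'.support = T.edges → n ≤ m) ∧
    (∀ (m : ℕ) (W' : G.Walk m), 0 < m → W'.IsClosed → W'.support = T.edges →
      (∀ (m' : ℕ) (W'' : G.Walk m'), W''.IsClosed → W''.support = T.edges → m ≤ m') →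
      (∀ e, W'.edgeCount e = T.indicatorNat e) ∧ T.Crosses W') := by
  obtain ⟨hexists, hmin, hconv⟩ := OSG.cycleTree_minimum_closed_walk_general T
  exact ⟨hexists, fun n W _ _ hcount _ => hmin n W hcount, fun m W' _ => hconv m W'⟩
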